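/- Let F be a field of characteristic zero, n ≥ 1, and W an F-vector space of dimension 2n. Let the group SL(W) act on W ⊕ W* by g·(w, ξ) = (g(w), ξ ∘ g⁻¹), and on each exterior power Λ^k(W ⊕ W*) by functoriality. Then the subspace of SL(W)-invariant vectors in Λ^k(W ⊕ W*) has dimension 0 if k is odd; dimension 1 if k is even with 0 ≤ k ≤ 4n and k ≠ 2n; and dimension 3 if k = 2n. -/

import Mathlib

/-- The subspace of `SL(W)`-invariant vectors in the `k`-th exterior power of `W ⊕ W*`,
where `g ∈ SL(W)` acts by `(w, ξ) ↦ (g w, ξ ∘ g⁻¹)` and on `⋀^k` by functoriality. -/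
noncomputable def slInvariants (F : Type*) [Field F]
    (W : Type*) [AddCommGroup W] [Module F W] (k : ℕ) :
    Submodule F (ExteriorAlgebra F (W × Module.Dual F W)) :=
  (⋀[F]^k (W × Module.Dual F W)) ⊓
    ⨅ (g : W ≃ₗ[F] W) (_ : LinearMap.det (g : W →ₗ[F] W) = 1),
      LinearMap.ker
        ((ExteriorAlgebra.map
            (LinearMap.prodMap (g : W →ₗ[F] W)
              (LinearMap.dualMap (g.symm : W →ₗ[F] W)))).toLinearMap - LinearMap.id)

/-!
Take a basis `e i` of `W` and its dual basis `f i`. The diagonal torus of `SL(W)` scales every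
monomial in the `e i` and `f i`, and the monomials occurring in an invariant vector have trivial
weight. These are the balanced monomials `e_S f_S`, the product of all `e i`, and the product of all
`f i`. Monomial matrices of determinant one permute the balanced monomials of a given degree
transitively, so one of their coefficients decides whether all of them vanish; this bounds the
dimension from above. The bound is attained because the two volume elements are invariant, and so is
the sum of the `e_S f_S` with suitable signs: it is the canonical element of `⋀^p W ⊗ ⋀^p W*`, hence
independent of the basis.
-/

open Module Finset

section ExteriorMonomials

variable {R M N I J : Type*} [CommRing R] [AddCommGroup M] [Module R M] [AddCommGroup N]
  [Module R N]

theorem repr_apply_eq_mul_of_apply_eq_smul {b : Basis I R M} {c : Basis J R N}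
    {f : M →ₗ[R] N} {μ : I → R} {τ : I → J} (hτ : Function.Injective τ)
    (hf : ∀ i, f (b i) = μ i • c (τ i)) (v : M) (i : I) :
    c.repr (f v) (τ i) = μ i * b.repr v i := by
  suffices h : c.coord (τ i) ∘ₗ f = μ i • b.coord i from LinearMap.congr_fun h v
  refine b.ext fun j => ?_
  by_cases hij : j = i
  · simp [hij, hf]
  · simp [hf, hij, hτ.ne hij]

/-- The monomial basis of the exterior algebra attached to a basis `b` whose index type carries no
order: the `s`-th vector is the product of the `b i`, `i ∈ s`. Changing the order of the factors
changes the vector by a sign, so an arbitrary linear order on `I` is chosen. -/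
noncomputable def exteriorMonomial (b : Basis I R M) : Basis (Finset I) R (ExteriorAlgebra R M) :=
  letI : LinearOrder I := IsWellOrder.linearOrder WellOrderingRel
  b.ExteriorAlgebra

theorem exists_exteriorMonomial_eq_ιMulti (b : Basis I R M) (s : Finset I) :
    ∃ (k : ℕ) (a : Fin k ↪ I), univ.map a = s ∧
      exteriorMonomial b s = ExteriorAlgebra.ιMulti R k (b ∘ a) := by
  let : LinearOrder I := IsWellOrder.linearOrder WellOrderingRel
  exact ⟨#s, (s.orderEmbOfFin rfl).toEmbedding, coe_injective (by simp),
    ExteriorAlgebra.basis_apply_ofCard b rfl⟩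

theorem exists_ιMulti_comp_eq_smul_exteriorMonomial (b : Basis I R M) {k : ℕ} (a : Fin k ↪ I) :
    ∃ ε : ℤˣ, ExteriorAlgebra.ιMulti R k (b ∘ a) = ε • exteriorMonomial b (univ.map a) := by
  obtain ⟨k', a', ha', hmono⟩ := exists_exteriorMonomial_eq_ιMulti b (univ.map a)
  obtain rfl : k' = k := by simpa using congrArg card ha'
  have hmem (i : Fin k') : ∃ j, a' j = a i := by
    have : a i ∈ univ.map a' := by simp [ha']
    simpa using this
  choose σ hσ using hmem
  have hσ_inj : Function.Injective σ := fun i j hij => a.injective (by rw [← hσ, hij, hσ])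
  let σ' : Equiv.Perm (Fin k') := Equiv.ofBijective σ (Finite.injective_iff_bijective.mp hσ_inj)
  refine ⟨Equiv.Perm.sign σ', ?_⟩
  rw [hmono, ← AlternatingMap.map_perm]
  congr 1
  funext i
  simp [σ', hσ]

theorem map_ιMulti_comp_of_apply_eq_smul {b : Basis I R M} {c : Basis J R N} {f : M →ₗ[R] N}
    {μ : I → R} {π : I → J} (hf : ∀ i, f (b i) = μ i • c (π i)) {k : ℕ} (a : Fin k → I) :
    ExteriorAlgebra.map f (ExteriorAlgebra.ιMulti R k (b ∘ a)) =
      (∏ i, μ (a i)) • ExteriorAlgebra.ιMulti R k (c ∘ π ∘ a) := by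
  rw [ExteriorAlgebra.map_apply_ιMulti, ← AlternatingMap.map_smul_univ]
  congr 1
  funext i
  exact hf (a i)

theorem repr_exteriorMonomial_map_of_diagonal {b : Basis I R M} {f : M →ₗ[R] M} {μ : I → R}
    (hf : ∀ i, f (b i) = μ i • b i) (v : ExteriorAlgebra R M) (s : Finset I) :
    (exteriorMonomial b).repr (ExteriorAlgebra.map f v) s =
      (∏ i ∈ s, μ i) * (exteriorMonomial b).repr v s := by
  refine repr_apply_eq_mul_of_apply_eq_smul (f := (ExteriorAlgebra.map f).toLinearMap)
    (μ := fun t => ∏ i ∈ t, μ i) Function.injective_id (fun t => ?_) v s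
  obtain ⟨k, a, rfl, ht⟩ := exists_exteriorMonomial_eq_ιMulti b t
  simp only [id_eq, ht, AlgHom.toLinearMap_apply, prod_map]
  exact map_ιMulti_comp_of_apply_eq_smul (π := id) hf a

theorem repr_exteriorMonomial_map_eq_zero {b : Basis I R M} {c : Basis J R N} {f : M →ₗ[R] N}
    {μ : I → R} {π : I ↪ J} (hf : ∀ i, f (b i) = μ i • c (π i)) {v : ExteriorAlgebra R M}
    {s : Finset I} (hv : (exteriorMonomial b).repr v s = 0) :
    (exteriorMonomial c).repr (ExteriorAlgebra.map f v) (s.map π) = 0 := by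
  have hmono (t : Finset I) : ∃ r : R, ExteriorAlgebra.map f (exteriorMonomial b t) =
      r • exteriorMonomial c (t.map π) := by
    obtain ⟨k, a, rfl, ht⟩ := exists_exteriorMonomial_eq_ιMulti b t
    obtain ⟨ε, hε⟩ := exists_ιMulti_comp_eq_smul_exteriorMonomial c (a.trans π)
    refine ⟨(∏ i, μ (a i)) * (ε : ℤ), ?_⟩
    rw [ht, map_ιMulti_comp_of_apply_eq_smul hf, mul_smul, map_map, Int.cast_smul_eq_zsmul,
      ← Units.smul_def, ← hε]
    rfl
  choose r hr using hmono
  have := repr_apply_eq_mul_of_apply_eq_smul (f := (ExteriorAlgebra.map f).toLinearMap)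
    (map_injective π) hr v s
  rwa [hv, mul_zero] at this

theorem exteriorMonomial_mem_exteriorPower (b : Basis I R M) (s : Finset I) :
    exteriorMonomial b s ∈ ⋀[R]^(#s) M := by
  obtain ⟨k, a, rfl, ha⟩ := exists_exteriorMonomial_eq_ιMulti b s
  rw [ha, card_map, card_fin]
  exact ExteriorAlgebra.ιMulti_range R k ⟨_, rfl⟩

theorem repr_exteriorMonomial_eq_zero_of_card_ne (b : Basis I R M) {k : ℕ}
    {v : ExteriorAlgebra R M} (hv : v ∈ ⋀[R]^k M) {s : Finset I} (hs : #s ≠ k) :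
    (exteriorMonomial b).repr v s = 0 := by
  let : LinearOrder I := IsWellOrder.linearOrder WellOrderingRel
  rw [← exteriorPower.ιMulti_family_span_fixedDegree_of_span R b.span_eq] at hv
  induction hv using Submodule.span_induction with
  | mem x hx =>
    obtain ⟨t, rfl⟩ := hx
    rw [← ExteriorAlgebra.basis_apply_powersetCard, exteriorMonomial, Basis.repr_self,
      Finsupp.single_eq_of_ne]
    rintro rfl
    exact hs t.2
  | zero => simp
  | add x y _ _ hx hy => simp [hx, hy]
  | smul r x _ hx => simp [hx]

end ExteriorMonomials

section MonomialMatrices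

variable {R U E ι : Type*} [CommRing R] [AddCommGroup U] [Module R U] [AddCommGroup E]
  [Module R E]

theorem alternatingMap_comp_basis_eq_det_smul [Finite ι] (b : Basis ι R U) (A : U [⋀^ι]→ₗ[R] E)
    (g : U →ₗ[R] U) : A (g ∘ b) = LinearMap.det g • A b := by
  classical
  have := Fintype.ofFinite ι
  have hA : A = (LinearMap.toSpanSingleton R E (A b)).compAlternatingMap b.det := by
    refine b.ext_alternating fun v hv => ?_
    let σ : Equiv.Perm ι := Equiv.ofBijective v (Finite.injective_iff_bijective.mp hv)
    change A (b ∘ σ) = b.det (b ∘ σ) • A b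
    rw [A.map_perm, b.det.map_perm, b.det_self, smul_assoc, one_smul]
  conv_lhs => rw [hA]
  simp [b.det_comp, b.det_self]

theorem map_ιMulti_comp_eq_det_smul {m : ℕ} (b : Basis (Fin m) R U) {j : U →ₗ[R] E}
    {f : E →ₗ[R] E} {g : U →ₗ[R] U} (hf : f ∘ₗ j = j ∘ₗ g) :
    ExteriorAlgebra.map f (ExteriorAlgebra.ιMulti R m (j ∘ b)) =
      LinearMap.det g • ExteriorAlgebra.ιMulti R m (j ∘ b) := by
  rw [ExteriorAlgebra.map_apply_ιMulti, ← Function.comp_assoc, ← LinearMap.coe_comp, hf]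
  exact alternatingMap_comp_basis_eq_det_smul b ((ExteriorAlgebra.ιMulti R m).compLinearMap j) g

/-- The linear automorphism `b i ↦ t i • b (σ i)`, a monomial matrix in the basis `b`. -/
noncomputable def monomialEquiv (b : Basis ι R U) (σ : Equiv.Perm ι) (t : ι → Rˣ) : U ≃ₗ[R] U :=
  b.equiv ((b.reindex σ.symm).unitsSMul t) (.refl ι)

@[simp]
theorem monomialEquiv_apply_basis (b : Basis ι R U) (σ : Equiv.Perm ι) (t : ι → Rˣ) (i : ι) :
    monomialEquiv b σ t (b i) = (t i : R) • b (σ i) := by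
  simp [monomialEquiv, Basis.unitsSMul_apply, Units.smul_def]

theorem det_monomialEquiv [Fintype ι] [DecidableEq ι] (b : Basis ι R U) (σ : Equiv.Perm ι)
    (t : ι → Rˣ) :
    LinearMap.det (monomialEquiv b σ t : U →ₗ[R] U) =
      ((Equiv.Perm.sign σ : ℤ) : R) * ∏ i, (t i : R) := by
  have hcomp : (monomialEquiv b σ t : U →ₗ[R] U) ∘ b = fun i => (t i : R) • (b ∘ σ) i := by
    funext i
    simp
  rw [← mul_one (LinearMap.det _), ← b.det_self, ← b.det_comp, hcomp,
    AlternatingMap.map_smul_univ, AlternatingMap.map_perm, b.det_self]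
  simp [mul_comm, Units.smul_def]

theorem dualMap_symm_monomialEquiv_dualBasis [Finite ι] [DecidableEq ι] (b : Basis ι R U)
    (σ : Equiv.Perm ι) (t : ι → Rˣ) (i : ι) :
    LinearMap.dualMap ((monomialEquiv b σ t).symm : U →ₗ[R] U) (b.dualBasis i) =
      ((t i)⁻¹ : Rˣ) • b.dualBasis (σ i) := by
  refine b.ext fun j => ?_
  obtain ⟨j, rfl⟩ := σ.surjective j
  have hj : (monomialEquiv b σ t).symm (b (σ j)) = ((t j)⁻¹ : Rˣ) • b j := by
    simp [LinearEquiv.symm_apply_eq, Units.smul_def, smul_smul]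
  by_cases hij : j = i
  · subst hij
    simp [hj, Units.smul_def]
  · simp [hj, hij]

end MonomialMatrices

section DualBases

variable {R U U' N κ : Type*} [CommRing R] [AddCommGroup U] [Module R U] [AddCommGroup U']
  [Module R U'] [AddCommGroup N] [Module R N] [Fintype κ]

theorem sum_apply_apply_eq_of_dual (β : U' →ₗ[R] Dual R U) (μ : U →ₗ[R] U' →ₗ[R] N)
    {b c : Basis κ R U} {b' c' : Basis κ R U'} (hb : ∀ i, β (b' i) = b.coord i)
    (hc : ∀ i, β (c' i) = c.coord i) :
    ∑ i, μ (b i) (b' i) = ∑ i, μ (c i) (c' i) := by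
  classical
  have hrepr (x : U') (j : κ) : c'.repr x j = β x (c j) := by
    suffices h : c'.coord j = (LinearMap.applyₗ (c j)) ∘ₗ β from LinearMap.congr_fun h x
    refine c'.ext fun i => ?_
    simp [hc, Finsupp.single_apply, eq_comm]
  calc ∑ i, μ (b i) (b' i) = ∑ i, ∑ j, β (b' i) (c j) • μ (b i) (c' j) := by
        refine sum_congr rfl fun i _ => ?_
        conv_lhs => rw [← c'.sum_repr (b' i)]
        simp [hrepr]
    _ = ∑ j, μ (∑ i, b.repr (c j) i • b i) (c' j) := by
        rw [sum_comm]
        simp only [hb, Basis.coord_apply, map_sum, map_smul, LinearMap.sum_apply,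
          LinearMap.smul_apply]
    _ = ∑ j, μ (c j) (c' j) := by simp only [b.sum_repr]

end DualBases

section CanonicalElement

variable {R W ι : Type*} [CommRing R] [AddCommGroup W] [Module R W] [LinearOrder ι] [Fintype ι]

/-- The canonical element of `⋀^p W ⊗ ⋀^p W* ⊆ ⋀^(2p) (W ⊕ W*)`, corresponding to the identity of
`⋀^p W`, written in terms of a basis of `W`. -/
noncomputable def canonicalElement (B : Basis ι R W) (p : ℕ) :
    ExteriorAlgebra R (W × Dual R W) :=
  ∑ S : Set.powersetCard ι p,
    ExteriorAlgebra.map (LinearMap.inl R W (Dual R W)) (ExteriorAlgebra.ιMulti_family R p B S) *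
      ExteriorAlgebra.map (LinearMap.inr R W (Dual R W))
        (ExteriorAlgebra.ιMulti_family R p B.dualBasis S)

theorem canonicalElement_eq (B C : Basis ι R W) (p : ℕ) :
    canonicalElement B p = canonicalElement C p := by
  have hdual (D : Basis ι R W) (S : Set.powersetCard ι p) :
      exteriorPower.pairingDual R W p (D.dualBasis.exteriorPower p S) =
        (D.exteriorPower p).coord S := by
    rw [exteriorPower.basis_coord, exteriorPower.basis_apply, Basis.coe_dualBasis]
    rfl
  let μ : ⋀[R]^p W →ₗ[R] ⋀[R]^p (Dual R W) →ₗ[R] ExteriorAlgebra R (W × Dual R W) :=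
    (LinearMap.mul R _).compl₁₂
      ((ExteriorAlgebra.map (LinearMap.inl R W (Dual R W))).toLinearMap ∘ₗ Submodule.subtype _)
      ((ExteriorAlgebra.map (LinearMap.inr R W (Dual R W))).toLinearMap ∘ₗ Submodule.subtype _)
  have := sum_apply_apply_eq_of_dual _ μ (hdual B) (hdual C)
  simpa [canonicalElement, μ, exteriorPower.basis_apply] using this

theorem exists_canonicalElement_eq_sum_smul_exteriorMonomial (B : Basis ι R W) (p : ℕ) :
    ∃ ε : Set.powersetCard ι p → ℤˣ, canonicalElement B p =
      ∑ S, ε S • exteriorMonomial (B.prod B.dualBasis) ((S : Finset ι).disjSum S) := by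
  have hterm (S : Set.powersetCard ι p) : ∃ ε : ℤˣ,
      ExteriorAlgebra.map (LinearMap.inl R W (Dual R W)) (ExteriorAlgebra.ιMulti_family R p B S) *
        ExteriorAlgebra.map (LinearMap.inr R W (Dual R W))
          (ExteriorAlgebra.ιMulti_family R p B.dualBasis S) =
      ε • exteriorMonomial (B.prod B.dualBasis) ((S : Finset ι).disjSum S) := by
    let e : Fin p ↪ ι := (Set.powersetCard.ofFinEmbEquiv.symm S).toEmbedding
    let a : Fin (p + p) ↪ ι ⊕ ι := finSumFinEquiv.symm.toEmbedding.trans (e.sumMap e)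
    have ha : univ.map a = (S : Finset ι).disjSum S := by
      have hrange (i : ι) : (∃ x, Set.powersetCard.ofFinEmbEquiv.symm S x = i) ↔
          i ∈ (S : Finset ι) := Set.powersetCard.mem_range_ofFinEmbEquiv_symm_iff_mem S i
      rw [← map_map, map_univ_equiv]
      ext (i | i) <;> simp [e, hrange]
    obtain ⟨ε, hε⟩ := exists_ιMulti_comp_eq_smul_exteriorMonomial (B.prod B.dualBasis) a
    refine ⟨ε, ?_⟩
    rw [← ha, ← hε, ExteriorAlgebra.ιMulti_family, ExteriorAlgebra.ιMulti_family,
      ExteriorAlgebra.map_apply_ιMulti, ExteriorAlgebra.map_apply_ιMulti,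
      ExteriorAlgebra.ιMulti_mul_ιMulti]
    congr 1
    funext i
    refine Fin.addCases (fun i => ?_) (fun i => ?_) i <;>
      simp [a, e, Basis.prod_apply, -Fin.natAdd_eq_addNat]
  choose ε hε using hterm
  exact ⟨ε, sum_congr rfl fun S _ => hε S⟩

theorem repr_canonicalElement_disjSum_self_ne_zero [Nontrivial R] (B : Basis ι R W) (T : Finset ι) :
    (exteriorMonomial (B.prod B.dualBasis)).repr (canonicalElement B #T) (T.disjSum T) ≠ 0 := by
  obtain ⟨ε, hε⟩ := exists_canonicalElement_eq_sum_smul_exteriorMonomial B #T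
  let T' : Set.powersetCard ι #T := ⟨T, rfl⟩
  have hoff (S : Set.powersetCard ι #T) (hS : S ≠ T') :
      T.disjSum T ≠ (S : Finset ι).disjSum S :=
    fun h => hS (Subtype.ext (by simpa using congrArg toLeft h.symm))
  rw [hε, map_sum, Finsupp.finsetSum_apply, sum_eq_single T'
    (fun S _ hS => ?_) (by simp)]
  · rcases Int.units_eq_one_or (ε T') with h | h <;> simp [h, T']
  · rw [Units.smul_def, map_zsmul, Finsupp.smul_apply, Basis.repr_self,
      Finsupp.single_eq_of_ne (hoff S hS), smul_zero]

theorem repr_canonicalElement_eq_zero (B : Basis ι R W) {p : ℕ} {s : Finset (ι ⊕ ι)}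
    (hs : ∀ S : Finset ι, s ≠ S.disjSum S) :
    (exteriorMonomial (B.prod B.dualBasis)).repr (canonicalElement B p) s = 0 := by
  obtain ⟨ε, hε⟩ := exists_canonicalElement_eq_sum_smul_exteriorMonomial B p
  rw [hε, map_sum, Finsupp.finsetSum_apply]
  refine sum_eq_zero fun S _ => ?_
  rw [Units.smul_def, map_zsmul, Finsupp.smul_apply, Basis.repr_self,
    Finsupp.single_eq_of_ne (hs S), smul_zero]

end CanonicalElement

section Charge

variable {ι : Type*}

theorem exists_perm_map_eq {S T : Finset ι} (h : #S = #T) :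
    ∃ σ : Equiv.Perm ι, S.map σ.toEmbedding = T := by
  classical
  have : MulAction.IsPretransitive (Equiv.Perm ι) (Set.powersetCard ι #T) :=
    Set.powersetCard.isPretransitive
  obtain ⟨σ, hσ⟩ := MulAction.exists_smul_eq (Equiv.Perm ι)
    (⟨S, h⟩ : Set.powersetCard ι #T) ⟨T, rfl⟩
  refine ⟨σ, ?_⟩
  rw [map_eq_image]
  exact congrArg Subtype.val hσ

variable [DecidableEq ι]

/-- For `s` indexing a monomial in the basis `e i, f i` of `W ⊕ W*`, the exponent of `t i` in the
character by which `diag(t)` acts on that monomial. -/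
def charge (s : Finset (ι ⊕ ι)) (i : ι) : ℤ :=
  (if Sum.inl i ∈ s then 1 else 0) - (if Sum.inr i ∈ s then 1 else 0)

theorem prod_sumElim_inv_eq_prod_zpow_charge {G : Type*} [CommGroup G] [Fintype ι] (t : ι → G)
    (s : Finset (ι ⊕ ι)) : ∏ x ∈ s, Sum.elim t t⁻¹ x = ∏ i, t i ^ charge s i := by
  rw [← Fintype.prod_ite_mem, Fintype.prod_sum_type, ← prod_mul_distrib]
  refine prod_congr rfl fun i _ => ?_
  by_cases hl : Sum.inl i ∈ s <;> by_cases hr : Sum.inr i ∈ s <;> simp [charge, hl, hr]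

theorem eq_of_zpow_charge_sub_eq_one {G : Type*} [Group G] {u : G} (hu : u ^ 2 ≠ 1)
    {s : Finset (ι ⊕ ι)} {i j : ι} (h : u ^ (charge s i - charge s j) = 1) :
    charge s i = charge s j := by
  by_contra hne
  obtain ⟨c, hc⟩ : charge s i - charge s j ∣ 2 := by
    unfold charge at hne ⊢
    split_ifs at hne ⊢ <;> simp_all
  refine hu ?_
  rw [← zpow_ofNat, hc, zpow_mul, h, one_zpow]

theorem eq_disjSum_of_charge_eq [Fintype ι] {s : Finset (ι ⊕ ι)}
    (hs : ∀ i j, charge s i = charge s j) :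
    (∃ S : Finset ι, s = S.disjSum S) ∨ s = univ.disjSum ∅ ∨ s = disjSum ∅ univ := by
  by_cases hzero : ∀ i, charge s i = 0
  · refine .inl ⟨s.toLeft, ?_⟩
    ext (i | i) <;> have := hzero i <;> grind [charge, inl_mem_disjSum, inr_mem_disjSum, mem_toLeft]
  · obtain ⟨i, hi⟩ := not_forall.mp hzero
    refine .inr ?_
    have hcharge (j : ι) := hs j i
    unfold charge at hi hcharge
    by_cases hl : Sum.inl i ∈ s
    · refine .inl (Finset.ext ?_)
      rintro (j | j) <;> have := hcharge j <;> grind [inl_mem_disjSum, inr_mem_disjSum]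
    · refine .inr (Finset.ext ?_)
      rintro (j | j) <;> have := hcharge j <;> grind [inl_mem_disjSum, inr_mem_disjSum]

end Charge

section Action

variable {R W ι : Type*} [CommRing R] [AddCommGroup W] [Module R W]

/-- The action `(w, ξ) ↦ (g w, ξ ∘ g⁻¹)` of a linear automorphism `g` of `W` on `W ⊕ W*`. -/
noncomputable def sumDualMap (g : W ≃ₗ[R] W) : (W × Dual R W) →ₗ[R] (W × Dual R W) :=
  LinearMap.prodMap (g : W →ₗ[R] W) (LinearMap.dualMap (g.symm : W →ₗ[R] W))

theorem sumDualMap_comp_inl (g : W ≃ₗ[R] W) :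
    sumDualMap g ∘ₗ LinearMap.inl R W (Dual R W) = LinearMap.inl R W (Dual R W) ∘ₗ g := by
  ext <;> simp [sumDualMap]

theorem sumDualMap_comp_inr (g : W ≃ₗ[R] W) :
    sumDualMap g ∘ₗ LinearMap.inr R W (Dual R W) =
      LinearMap.inr R W (Dual R W) ∘ₗ LinearMap.dualMap (g.symm : W →ₗ[R] W) := by
  ext <;> simp [sumDualMap]

theorem sumDualMap_monomialEquiv_apply [Finite ι] [DecidableEq ι] (B : Basis ι R W)
    (σ : Equiv.Perm ι) (t : ι → Rˣ) (x : ι ⊕ ι) :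
    sumDualMap (monomialEquiv B σ t) (B.prod B.dualBasis x) =
      ((Sum.elim t t⁻¹ x : Rˣ) : R) • B.prod B.dualBasis (Equiv.sumCongr σ σ x) := by
  rcases x with i | i
  · simp [sumDualMap, Basis.prod_apply]
  · simp [sumDualMap, Basis.prod_apply, dualMap_symm_monomialEquiv_dualBasis, Units.smul_def,
      -Basis.coe_dualBasis, -LinearMap.dualMap_apply]

theorem map_sumDualMap_canonicalElement [LinearOrder ι] [Fintype ι] (B : Basis ι R W) (p : ℕ)
    (g : W ≃ₗ[R] W) :
    ExteriorAlgebra.map (sumDualMap g) (canonicalElement B p) = canonicalElement (B.map g) p := by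
  have hdual : (B.map g).dualBasis = LinearMap.dualMap (g.symm : W →ₗ[R] W) ∘ B.dualBasis := by
    funext i
    ext x
    simp
  have hbasis : B.map g = (g : W →ₗ[R] W) ∘ B := by
    funext i
    simp
  simp only [canonicalElement, map_sum, map_mul, ExteriorAlgebra.ιMulti_family,
    ExteriorAlgebra.map_apply_ιMulti, hdual, hbasis, ← Function.comp_assoc, ← LinearMap.coe_comp,
    sumDualMap_comp_inl, sumDualMap_comp_inr]

end Action

section Invariants

variable {F W ι : Type*} [Field F] [AddCommGroup W] [Module F W]

theorem mem_slInvariants_iff {k : ℕ} {v : ExteriorAlgebra F (W × Dual F W)} :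
    v ∈ slInvariants F W k ↔ v ∈ ⋀[F]^k (W × Dual F W) ∧
      ∀ g : W ≃ₗ[F] W, LinearMap.det (g : W →ₗ[F] W) = 1 →
        ExteriorAlgebra.map (sumDualMap g) v = v := by
  simp [slInvariants, sumDualMap, sub_eq_zero]

theorem canonicalElement_mem_slInvariants [LinearOrder ι] [Fintype ι] (B : Basis ι F W) (p : ℕ) :
    canonicalElement B p ∈ slInvariants F W (2 * p) := by
  refine mem_slInvariants_iff.mpr ⟨?_, fun g _ => ?_⟩
  · obtain ⟨ε, hε⟩ := exists_canonicalElement_eq_sum_smul_exteriorMonomial B p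
    rw [hε]
    refine sum_mem fun S _ => ?_
    have := exteriorMonomial_mem_exteriorPower (B.prod B.dualBasis) ((S : Finset ι).disjSum S)
    rw [card_disjSum, Set.powersetCard.card_eq, ← two_mul] at this
    rw [Units.smul_def]
    exact zsmul_mem this _
  · rw [map_sumDualMap_canonicalElement, canonicalElement_eq]

variable {U : Type*} [AddCommGroup U] [Module F U]

theorem exteriorMonomial_mem_slInvariants {m : ℕ} {b : Basis (ι ⊕ ι) F (W × Dual F W)}
    {c : Basis (Fin m) F U} {j : U →ₗ[F] W × Dual F W} {a : Fin m ↪ ι ⊕ ι} (ha : b ∘ a = j ∘ c)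
    (hj : ∀ g : W ≃ₗ[F] W, LinearMap.det (g : W →ₗ[F] W) = 1 →
      ∃ h : U →ₗ[F] U, LinearMap.det h = 1 ∧ sumDualMap g ∘ₗ j = j ∘ₗ h) :
    exteriorMonomial b (univ.map a) ∈ slInvariants F W m := by
  have hmem := exteriorMonomial_mem_exteriorPower b (univ.map a)
  rw [card_map, card_fin] at hmem
  refine mem_slInvariants_iff.mpr ⟨hmem, fun g hg => ?_⟩
  obtain ⟨h, hdet, hcomp⟩ := hj g hg
  obtain ⟨ε, hε⟩ := exists_ιMulti_comp_eq_smul_exteriorMonomial b a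
  have hfix := map_ιMulti_comp_eq_det_smul c hcomp
  rw [← ha, hdet, one_smul, hε, Units.smul_def, map_zsmul, ← Units.smul_def,
    ← Units.smul_def] at hfix
  exact smul_left_cancel ε hfix

theorem exteriorMonomial_univ_disjSum_empty_mem_slInvariants {m : ℕ} (B : Basis (Fin m) F W) :
    exteriorMonomial (B.prod B.dualBasis) (univ.disjSum ∅) ∈ slInvariants F W m := by
  rw [disjSum_empty]
  refine exteriorMonomial_mem_slInvariants (c := B) (j := LinearMap.inl F W (Dual F W)) ?_
    fun g hg => ⟨g, hg, ?_⟩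
  · funext i
    simp
  · exact sumDualMap_comp_inl g

theorem exteriorMonomial_empty_disjSum_univ_mem_slInvariants {m : ℕ} (B : Basis (Fin m) F W) :
    exteriorMonomial (B.prod B.dualBasis) (disjSum ∅ univ) ∈ slInvariants F W m := by
  have : FiniteDimensional F W := .of_basis B
  rw [empty_disjSum]
  refine exteriorMonomial_mem_slInvariants (c := B.dualBasis)
    (j := LinearMap.inr F W (Dual F W)) ?_
    fun g hg => ⟨LinearMap.dualMap (g.symm : W →ₗ[F] W), ?_, ?_⟩
  · funext i
    simp
  · rw [LinearMap.det_dualMap]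
    simpa only [hg, mul_one] using g.det_symm_mul_det
  · exact sumDualMap_comp_inr g

end Invariants

section SeparatingMonomials

variable {F W ι : Type*} [Field F] [AddCommGroup W] [Module F W] [DecidableEq ι]

theorem charge_eq_of_mem_slInvariants [Finite ι] {u : Fˣ} (hu : u ^ 2 ≠ 1) (B : Basis ι F W) {k : ℕ}
    {v : ExteriorAlgebra F (W × Dual F W)} (hv : v ∈ slInvariants F W k) {s : Finset (ι ⊕ ι)}
    (hs : (exteriorMonomial (B.prod B.dualBasis)).repr v s ≠ 0) (i j : ι) :
    charge s i = charge s j := by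
  have := Fintype.ofFinite ι
  let t : ι → Fˣ := Pi.mulSingle i u * Pi.mulSingle j u⁻¹
  have hdet : LinearMap.det (monomialEquiv B 1 t : W →ₗ[F] W) = 1 := by
    rw [det_monomialEquiv, ← Units.coe_prod]
    simp [t, prod_mul_distrib]
  have hdiag (x : ι ⊕ ι) : sumDualMap (monomialEquiv B 1 t) (B.prod B.dualBasis x) =
      ((Sum.elim t t⁻¹ x : Fˣ) : F) • B.prod B.dualBasis x := by
    rw [sumDualMap_monomialEquiv_apply]
    simp
  have hweight := repr_exteriorMonomial_map_of_diagonal hdiag v s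
  rw [(mem_slInvariants_iff.mp hv).2 _ hdet, eq_comm, mul_eq_right₀ hs, ← Units.coe_prod,
    Units.val_eq_one, prod_sumElim_inv_eq_prod_zpow_charge] at hweight
  refine eq_of_zpow_charge_sub_eq_one hu ?_
  rw [← hweight]
  simp only [t, Pi.mul_apply, mul_zpow, prod_mul_distrib]
  simp [Pi.mulSingle_apply, ite_pow, zpow_sub]

theorem repr_disjSum_self_eq_zero_of_card_eq [Finite ι] [Nonempty ι] (B : Basis ι F W) {k : ℕ}
    {v : ExteriorAlgebra F (W × Dual F W)} (hv : v ∈ slInvariants F W k) {S T : Finset ι}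
    (hST : #S = #T) (hS : (exteriorMonomial (B.prod B.dualBasis)).repr v (S.disjSum S) = 0) :
    (exteriorMonomial (B.prod B.dualBasis)).repr v (T.disjSum T) = 0 := by
  have := Fintype.ofFinite ι
  obtain ⟨σ, rfl⟩ := exists_perm_map_eq hST
  -- Placing the sign of `σ` in one entry gives the permutation matrix determinant one.
  let t : ι → Fˣ :=
    Pi.mulSingle (Classical.arbitrary ι) (Units.map (Int.castRingHom F) (Equiv.Perm.sign σ))
  have hdet : LinearMap.det (monomialEquiv B σ t : W →ₗ[F] W) = 1 := by
    rw [det_monomialEquiv, ← Units.coe_prod]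
    simp [t, ← Int.cast_mul]
  have hmap := repr_exteriorMonomial_map_eq_zero (π := (Equiv.sumCongr σ σ).toEmbedding)
    (sumDualMap_monomialEquiv_apply B σ t) hS
  rw [(mem_slInvariants_iff.mp hv).2 _ hdet] at hmap
  convert hmap
  ext (i | i) <;> simp

variable [Fintype ι]

/-- The monomials of degree `k` whose coefficients determine an `SL(W)`-invariant vector; `T` stands
for all subsets of `ι` of the same size. -/
def separatingMonomials (T : Finset ι) (k : ℕ) : Finset (Finset (ι ⊕ ι)) :=
  {s ∈ {T.disjSum T, univ.disjSum ∅, disjSum ∅ univ} | #s = k}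

theorem card_separatingMonomials [Nonempty ι] (T : Finset ι) (k : ℕ) :
    #(separatingMonomials T k) =
      (if 2 * #T = k then 1 else 0) + (if Fintype.card ι = k then 2 else 0) := by
  have huniv : (univ : Finset ι) ≠ ∅ := univ_nonempty.ne_empty
  have hbalanced (U V : Finset ι) (h : U ≠ V) : T.disjSum T ≠ U.disjSum V := by
    rw [Ne, disjSum_inj]
    rintro ⟨rfl, rfl⟩
    exact h rfl
  have hvolume : univ.disjSum ∅ ≠ (disjSum ∅ univ : Finset (ι ⊕ ι)) := by
    rw [Ne, disjSum_inj]
    exact fun h => huniv h.1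
  simp only [separatingMonomials, filter_insert, filter_singleton, card_disjSum, card_empty,
    card_univ, add_zero, zero_add, two_mul]
  split_ifs <;> simp [hbalanced _ _ huniv, hbalanced _ _ huniv.symm, hvolume,
    -disjSum_empty, -empty_disjSum]

theorem eq_zero_of_repr_separatingMonomials_eq_zero [Nonempty ι] {u : Fˣ} (hu : u ^ 2 ≠ 1)
    (B : Basis ι F W) {k : ℕ} {T : Finset ι} (hT : #T = min (k / 2) (Fintype.card ι))
    {v : ExteriorAlgebra F (W × Dual F W)} (hv : v ∈ slInvariants F W k)
    (hrepr : ∀ s ∈ separatingMonomials T k, (exteriorMonomial (B.prod B.dualBasis)).repr v s = 0) :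
    v = 0 := by
  refine (exteriorMonomial (B.prod B.dualBasis)).ext_elem fun s => ?_
  rw [map_zero, Finsupp.zero_apply]
  by_contra hs
  have hcard : #s = k := not_imp_comm.mp (repr_exteriorMonomial_eq_zero_of_card_ne _
    (mem_slInvariants_iff.mp hv).1) hs
  obtain ⟨S, rfl⟩ | rfl | rfl := eq_disjSum_of_charge_eq (charge_eq_of_mem_slInvariants hu B hv hs)
  · have hTS : #T = #S := by
      have := S.card_le_univ
      rw [card_disjSum] at hcard
      lia
    refine hs (repr_disjSum_self_eq_zero_of_card_eq B hv hTS (hrepr _ ?_))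
    simp [separatingMonomials, hTS, ← hcard]
  all_goals exact hs (hrepr _ (by simp [separatingMonomials, ← hcard]))

theorem exists_mem_slInvariants_of_mem_separatingMonomials {m : ℕ} [NeZero m]
    (B : Basis (Fin m) F W) {k : ℕ} {T : Finset (Fin m)} {s : Finset (Fin m ⊕ Fin m)}
    (hs : s ∈ separatingMonomials T k) :
    ∃ u ∈ slInvariants F W k, (exteriorMonomial (B.prod B.dualBasis)).repr u s ≠ 0 ∧
      ∀ s' ∈ separatingMonomials T k, s' ≠ s →
        (exteriorMonomial (B.prod B.dualBasis)).repr u s' = 0 := by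
  have hmonomial (hmem : exteriorMonomial (B.prod B.dualBasis) s ∈ slInvariants F W k) :
      ∃ u ∈ slInvariants F W k, (exteriorMonomial (B.prod B.dualBasis)).repr u s ≠ 0 ∧
        ∀ s' ∈ separatingMonomials T k, s' ≠ s →
          (exteriorMonomial (B.prod B.dualBasis)).repr u s' = 0 :=
    ⟨_, hmem, by simp, fun s' _ hs' => by simp [Finsupp.single_eq_of_ne hs']⟩
  simp only [separatingMonomials, mem_filter, mem_insert, mem_singleton] at hs
  obtain ⟨rfl | rfl | rfl, rfl⟩ := hs
  · refine ⟨canonicalElement B #T, ?_, repr_canonicalElement_disjSum_self_ne_zero B T, ?_⟩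
    · rw [card_disjSum, ← two_mul]
      exact canonicalElement_mem_slInvariants B #T
    · intro s' hs' hne
      refine repr_canonicalElement_eq_zero B fun S => ?_
      rintro rfl
      have huniv : (univ : Finset (Fin m)) ≠ ∅ := univ_nonempty.ne_empty
      simp only [separatingMonomials, mem_filter, mem_insert, mem_singleton, disjSum_inj] at hs' hne
      grind
  · refine hmonomial ?_
    simpa using exteriorMonomial_univ_disjSum_empty_mem_slInvariants B
  · refine hmonomial ?_
    simpa using exteriorMonomial_empty_disjSum_univ_mem_slInvariants B

end SeparatingMonomials

section FinrankOfCoordinates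

variable {F V I : Type*} [DivisionRing F] [AddCommGroup V] [Module F V]

theorem finrank_eq_card_of_repr (b : Basis I F V) {K : Submodule F V} (C : Finset I)
    (hC : ∀ i ∈ C, ∃ u ∈ K, b.repr u i ≠ 0 ∧ ∀ j ∈ C, j ≠ i → b.repr u j = 0)
    (hK : ∀ v ∈ K, (∀ i ∈ C, b.repr v i = 0) → v = 0) : finrank F K = #C := by
  let L : K →ₗ[F] C → F := LinearMap.pi (fun i => b.coord i) ∘ₗ K.subtype
  have hL_inj : Function.Injective L := by
    rw [← LinearMap.ker_eq_bot, LinearMap.ker_eq_bot']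
    exact fun v hv => Subtype.ext (hK v v.2 fun i hi => congrFun hv ⟨i, hi⟩)
  have hL_surj : Function.Surjective L := by
    choose u hu hdiag hoff using hC
    intro y
    let w (j : C) : K := ⟨u j j.2, hu j j.2⟩
    refine ⟨∑ j, (y j / b.repr (w j) j) • w j, funext fun i => ?_⟩
    have hsum : L (∑ j, (y j / b.repr (w j) j) • w j) i =
        ∑ j, y j / b.repr (w j) j * b.repr (w j) i := by
      simp [L]
    rw [hsum, sum_eq_single i (fun j _ hj => ?_) (by simp), div_mul_cancel₀ _ (hdiag i i.2)]
    rw [hoff j j.2 i i.2 fun h => hj (Subtype.ext h.symm), mul_zero]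
  rw [(LinearEquiv.ofBijective L ⟨hL_inj, hL_surj⟩).finrank_eq, finrank_fintype_fun_eq_card,
    Fintype.card_coe]

end FinrankOfCoordinates

theorem stmt_2_general (F : Type*) [Field F] (hF : ∃ t : Fˣ, t ^ 2 ≠ 1)
    (W : Type*) [AddCommGroup W] [Module F W] [FiniteDimensional F W] [Nontrivial W] (k : ℕ) :
    finrank F (slInvariants F W k) =
      (if Even k ∧ k ≤ 2 * finrank F W then 1 else 0) + (if k = finrank F W then 2 else 0) := by
  obtain ⟨u, hu⟩ := hF
  have : NeZero (finrank F W) := ⟨finrank_pos.ne'⟩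
  let B := finBasis F W
  obtain ⟨T, -, hT⟩ : ∃ T ⊆ (univ : Finset (Fin (finrank F W))), #T = min (k / 2) (finrank F W) :=
    exists_subset_card_eq (by simp)
  have hbalanced : 2 * #T = k ↔ Even k ∧ k ≤ 2 * finrank F W := by grind
  rw [finrank_eq_card_of_repr (exteriorMonomial (B.prod B.dualBasis)) (separatingMonomials T k)
      (fun s hs => exists_mem_slInvariants_of_mem_separatingMonomials B hs)
      (fun v hv => eq_zero_of_repr_separatingMonomials_eq_zero hu B (by simpa using hT) hv),
    card_separatingMonomials]
  simp [hbalanced, eq_comm]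

/-- For a `2n`-dimensional vector space `W` over a field `F` of characteristic
zero, the space of `SL(W)`-invariants in `⋀^k (W ⊕ W*)` has dimension `0` for odd `k`,
dimension `1` for even `k ≤ 4n` with `k ≠ 2n`, and dimension `3` for `k = 2n`. -/
theorem stmt_2 (F : Type*) [Field F] [CharZero F]
    (W : Type*) [AddCommGroup W] [Module F W] [FiniteDimensional F W]
    (n : ℕ) (hn : 1 ≤ n) (hW : Module.finrank F W = 2 * n) (k : ℕ) :
    (Odd k → Module.finrank F ↥(slInvariants F W k) = 0) ∧
    (Even k → k ≤ 4 * n → k ≠ 2 * n → Module.finrank F ↥(slInvariants F W k) = 1) ∧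
    (k = 2 * n → Module.finrank F ↥(slInvariants F W k) = 3) := by
  have : Nontrivial W := Module.nontrivial_of_finrank_pos (R := F) (by lia)
  have htwo : (Units.mk0 2 two_ne_zero : Fˣ) ^ 2 ≠ 1 := by
    rw [Ne, Units.ext_iff]
    norm_num
  rw [stmt_2_general F ⟨_, htwo⟩ W k, hW]
  grind
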